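/- Fix a, b > 0, ε > 0, r > 0 and s ≥ 0. There exist constants c₅ > 0 and c > 0, depending only on r, ε, s, a, b, such that for every n and every n×n real matrix A satisfying condition (A): ∫_{{θ ∈ ℝⁿ : ‖Aθ‖_∞ ≤ r·n^ε}} ‖θ‖_∞^s·e^{−θᵀAθ} dθ = (1 + δ)·∫_{ℝⁿ} ‖θ‖_∞^s·e^{−θᵀAθ} dθ with |δ| ≤ c·exp(−c₅·n^{2ε}). -/

import Mathlib

/-!
Write `Q θ = θᵀAθ` and `M_s = ∫ ‖θ‖^s e^{-Q θ}`.  Since `A j j = 1`, translating along a coordinate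
axis gives the exact identity `Q (θ - t e_j) = Q θ - 2 t (Aθ)_j + t²`; everything rests on comparing
the integrand with such translates of it and using translation invariance of Lebesgue measure.

* Upper bound.  Put `R = r n^ε`.  If `‖Aθ‖_∞ > R`, then `σ (Aθ)_j > R` for some `j` and some sign `σ`,
  so `e^{-Q θ} ≤ e^{-R²} e^{-Q (θ - σ R e_j)}`, while `‖θ‖^s ≤ 2^s (‖θ - σ R e_j‖^s + R^s)`.  Summing over
  the `2n` pairs `(j, σ)` and integrating, the part of `M_s` outside the region is at most
  `2 n e^{-R²} 2^s (M_s + R^s M_0)`.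
* Comparison of `M_0` with `M_s`.  If `‖θ‖ ≤ 1`, then `‖θ + 2 e_j‖ ≥ 1`, and the entry bound gives
  `(Aθ)_j ≤ 1 + a`, so `e^{-Q θ}` is at most a constant times `e^{-Q (θ + 2 e_j)}`.  Hence
  `M_0 ≤ K M_s` with `K` depending only on `a`.

The relative error is therefore at most `2 n e^{-R²} 2^s (1 + K R^s)`, and the factors `n` and `R^s`
are absorbed into `e^{R²/2}`.
-/

open MeasureTheory Matrix Finset

/-- The ℓ^p norm on `Fin n → ℝ` (with `p = ⊤` the maximum norm). -/
noncomputable def lpnorm {n : ℕ} (p : ENNReal) (x : Fin n → ℝ) : ℝ :=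
  if p = ⊤ then ⨆ j, |x j| else (∑ j, |x j| ^ p.toReal) ^ (1 / p.toReal)

/-- The operator norm induced by the ℓ^p vector norm. -/
noncomputable def opNorm {n : ℕ} (p : ENNReal) (A : Matrix (Fin n) (Fin n) ℝ) : ℝ :=
  sSup {c : ℝ | ∃ x : Fin n → ℝ, x ≠ 0 ∧ c = lpnorm p (A.mulVec x) / lpnorm p x}

/-- Condition (A): `A = I + X` is symmetric positive definite, `X` has zero diagonal,
`|X_{jk}| ≤ a/n` for all `j,k`, and `‖A⁻¹‖₂ ≤ b`. -/
def CondA {n : ℕ} (a b : ℝ) (A : Matrix (Fin n) (Fin n) ℝ) : Prop :=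
  A.IsSymm ∧ A.PosDef ∧ (∀ j, A j j = 1) ∧
    (∀ j k, j ≠ k → |A j k| ≤ a / n) ∧ opNorm 2 A⁻¹ ≤ b

/-- The cube `U_n(ρ) = {θ ∈ ℝⁿ : |θ_j| ≤ ρ for all j}`. -/
def Uset (n : ℕ) (ρ : ℝ) : Set (Fin n → ℝ) := {θ | ∀ j, |θ j| ≤ ρ}

/-- Conditions (H1)–(H2): `H` is C¹ with `H(θ) ≤ c₁ θᵀAθ/n` and
`‖∇H(θ)‖_∞ ≤ c₂ (‖θ‖_∞³ + ‖θ‖_∞)/n`.  (The norm `‖θ‖` on `Fin n → ℝ` is the sup norm.) -/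
def CondH {n : ℕ} (c₁ c₂ : ℝ) (A : Matrix (Fin n) (Fin n) ℝ) (H : (Fin n → ℝ) → ℝ) : Prop :=
  ContDiff ℝ 1 H ∧
    (∀ θ, H θ ≤ c₁ * (θ ⬝ᵥ A.mulVec θ) / n) ∧
    (∀ θ (j : Fin n), |fderiv ℝ H θ (Pi.single j 1)| ≤ c₂ * (‖θ‖ ^ 3 + ‖θ‖) / n)

/-! ### Growth of powers, coercivity and integrability -/

/-- Every power of `x` is dominated by a Gaussian growth factor. -/
lemma exists_rpow_le_exp_sq (s κ : ℝ) (hs : 0 ≤ s) (hκ : 0 < κ) :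
    ∃ C : ℝ, 0 < C ∧ ∀ x : ℝ, 0 ≤ x → x ^ s ≤ C * Real.exp (κ * x ^ 2) := by
  set l : ℝ := κ / (s + 1) with hl
  have hl0 : 0 < l := by positivity
  have hsl : l * s ≤ κ := by
    rw [hl, div_mul_eq_mul_div, div_le_iff₀ (by positivity)]
    nlinarith
  refine ⟨(l⁻¹) ^ s * Real.exp (l * s), by positivity, fun x hx => ?_⟩
  have h1 : x ≤ l⁻¹ * Real.exp (l * x) := by
    rw [← div_eq_inv_mul, le_div_iff₀ hl0]
    have := Real.add_one_le_exp (l * x)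
    linarith
  calc x ^ s ≤ (l⁻¹ * Real.exp (l * x)) ^ s := Real.rpow_le_rpow hx h1 hs
    _ = (l⁻¹) ^ s * Real.exp (l * x * s) := by
        rw [Real.mul_rpow (by positivity) (by positivity), ← Real.exp_mul]
    _ ≤ (l⁻¹) ^ s * Real.exp (l * s + κ * x ^ 2) := by
        gcongr
        have h2 : x ≤ 1 + x ^ 2 := by nlinarith [sq_nonneg (x - 1)]
        have h3 : l * s * x ≤ l * s * (1 + x ^ 2) := by gcongr
        have h4 : l * s * x ^ 2 ≤ κ * x ^ 2 := by gcongr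
        linarith
    _ = _ := by rw [Real.exp_add, mul_assoc]

lemma norm_rpow_le_add {E : Type*} [SeminormedAddCommGroup E] (s : ℝ) (hs : 0 ≤ s) (x v : E) :
    ‖x‖ ^ s ≤ 2 ^ s * (‖x - v‖ ^ s + ‖v‖ ^ s) := by
  have h : ‖x‖ ≤ 2 * max ‖x - v‖ ‖v‖ := by
    have h1 := norm_add_le (x - v) v
    rw [sub_add_cancel] at h1
    linarith [le_max_left ‖x - v‖ ‖v‖, le_max_right ‖x - v‖ ‖v‖]
  have h0 : 0 ≤ max ‖x - v‖ ‖v‖ := le_max_of_le_left (norm_nonneg _)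
  calc ‖x‖ ^ s ≤ (2 * max ‖x - v‖ ‖v‖) ^ s := Real.rpow_le_rpow (norm_nonneg _) h hs
    _ = 2 ^ s * (max ‖x - v‖ ‖v‖) ^ s := Real.mul_rpow (by norm_num) h0
    _ ≤ _ := by
      gcongr
      have hx : 0 ≤ ‖x - v‖ ^ s := by positivity
      have hv : 0 ≤ ‖v‖ ^ s := by positivity
      rcases max_cases ‖x - v‖ ‖v‖ with h | h <;> rw [h.1] <;> linarith

/-- Coercivity of a positive definite quadratic form. -/
lemma exists_quadForm_lower_bound {n : ℕ} {A : Matrix (Fin n) (Fin n) ℝ} (hA : A.PosDef) :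
    ∃ m : ℝ, 0 < m ∧ ∀ θ : Fin n → ℝ, m * ‖θ‖ ^ 2 ≤ θ ⬝ᵥ A.mulVec θ := by
  have hcont : Continuous fun θ : Fin n → ℝ => θ ⬝ᵥ A.mulVec θ := by fun_prop
  have hpos : ∀ θ : Fin n → ℝ, θ ≠ 0 → 0 < θ ⬝ᵥ A.mulVec θ := fun θ hθ => by
    simpa using hA.dotProduct_mulVec_pos hθ
  rcases (Metric.sphere (0 : Fin n → ℝ) 1).eq_empty_or_nonempty with he | hne
  · refine ⟨1, one_pos, fun θ => ?_⟩
    have : θ = 0 := by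
      by_contra h
      have : ‖θ‖⁻¹ • θ ∈ Metric.sphere (0 : Fin n → ℝ) 1 := by
        simp [norm_smul, h]
      simp [he] at this
    simp [this]
  · obtain ⟨x, hx, hmin⟩ := (isCompact_sphere (0 : Fin n → ℝ) 1).exists_isMinOn hne
      hcont.continuousOn
    have hx1 : ‖x‖ = 1 := by simpa using hx
    refine ⟨x ⬝ᵥ A.mulVec x, hpos x (by intro h; simp [h] at hx1), fun θ => ?_⟩
    by_cases h : θ = 0
    · simp [h]
    · have hn : 0 < ‖θ‖ := norm_pos_iff.mpr h
      have hmem : ‖θ‖⁻¹ • θ ∈ Metric.sphere (0 : Fin n → ℝ) 1 := by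
        simp [norm_smul, h]
      have h1 : x ⬝ᵥ A.mulVec x ≤ (‖θ‖⁻¹ • θ) ⬝ᵥ A.mulVec (‖θ‖⁻¹ • θ) := hmin hmem
      simp only [Matrix.mulVec_smul, smul_dotProduct, dotProduct_smul, smul_eq_mul] at h1
      calc _ ≤ (‖θ‖⁻¹ * (‖θ‖⁻¹ * (θ ⬝ᵥ A.mulVec θ))) * ‖θ‖ ^ 2 := by gcongr
        _ = _ := by field_simp

lemma integrable_norm_rpow_mul_exp_neg_quadForm {n : ℕ} {A : Matrix (Fin n) (Fin n) ℝ}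
    (hA : A.PosDef) (s : ℝ) (hs : 0 ≤ s) :
    Integrable fun θ : Fin n → ℝ => ‖θ‖ ^ s * Real.exp (-(θ ⬝ᵥ A.mulVec θ)) := by
  obtain ⟨m, hm, hQ⟩ := exists_quadForm_lower_bound hA
  obtain ⟨C, hC, hpow⟩ := exists_rpow_le_exp_sq s (m / 2) hs (by positivity)
  -- The sup norm dominates the mean square: `∑ θ_i² ≤ n ‖θ‖²`; `n + 1` avoids dividing by zero.
  set μ : ℝ := m / 2 / (n + 1) with hμ
  have hμ0 : 0 < μ := by positivity
  have hprod : Integrable fun θ : Fin n → ℝ => C * ∏ i, Real.exp (-μ * θ i ^ 2) :=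
    (Integrable.fintype_prod (f := fun _ x => Real.exp (-μ * x ^ 2))
      fun _ => integrable_exp_neg_mul_sq hμ0).const_mul C
  refine hprod.mono' ?_ (Filter.Eventually.of_forall fun θ => ?_)
  · refine Continuous.aestronglyMeasurable ?_
    exact (continuous_norm.rpow_const fun _ => Or.inr hs).mul (by fun_prop)
  · rw [Real.norm_of_nonneg (by positivity), ← Real.exp_sum, ← Finset.mul_sum]
    have hsum : ∑ i, θ i ^ 2 ≤ (n + 1) * ‖θ‖ ^ 2 := by
      calc ∑ i, θ i ^ 2 ≤ ∑ _i : Fin n, ‖θ‖ ^ 2 := by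
            refine Finset.sum_le_sum fun i _ => ?_
            rw [← sq_abs]
            exact pow_le_pow_left₀ (abs_nonneg _) (norm_le_pi_norm θ i) 2
        _ = n * ‖θ‖ ^ 2 := by simp
        _ ≤ _ := by gcongr; linarith
    have h2 : μ * ∑ i, θ i ^ 2 ≤ m / 2 * ‖θ‖ ^ 2 := by
      calc μ * ∑ i, θ i ^ 2 ≤ μ * ((n + 1) * ‖θ‖ ^ 2) := by gcongr
        _ = _ := by rw [hμ]; field_simp
    calc ‖θ‖ ^ s * Real.exp (-(θ ⬝ᵥ A.mulVec θ))
        ≤ (C * Real.exp (m / 2 * ‖θ‖ ^ 2)) * Real.exp (-(θ ⬝ᵥ A.mulVec θ)) := by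
          gcongr; exact hpow _ (norm_nonneg _)
      _ = C * Real.exp (m / 2 * ‖θ‖ ^ 2 - θ ⬝ᵥ A.mulVec θ) := by
          rw [mul_assoc, ← Real.exp_add, sub_eq_add_neg]
      _ ≤ _ := by gcongr; linarith [hQ θ]

/-! ### Translation along a coordinate axis -/

lemma quadForm_sub_single {n : ℕ} {A : Matrix (Fin n) (Fin n) ℝ} (hA : A.IsSymm)
    (hd : ∀ j, A j j = 1) (θ : Fin n → ℝ) (j : Fin n) (t : ℝ) :
    (θ - Pi.single j t) ⬝ᵥ A.mulVec (θ - Pi.single j t) =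
      θ ⬝ᵥ A.mulVec θ - 2 * t * A.mulVec θ j + t ^ 2 := by
  have h1 : θ ⬝ᵥ A.mulVec (Pi.single j t) = t * A.mulVec θ j := by
    rw [Matrix.dotProduct_mulVec, ← Matrix.mulVec_transpose, hA.eq, dotProduct_single, mul_comm]
  have h2 : A.mulVec (Pi.single j t) j = t := by
    rw [Matrix.mulVec_single]
    simp [hd]
  rw [Matrix.mulVec_sub, sub_dotProduct, dotProduct_sub, dotProduct_sub, h1,
    single_dotProduct, single_dotProduct, h2]
  ring

/-- The integral `∫ e^{-Q}` is controlled by `∫ ‖θ‖^s e^{-Q}`, uniformly in the dimension. -/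
lemma integral_exp_le_const_mul {n : ℕ} {A : Matrix (Fin n) (Fin n) ℝ} {a s : ℝ} (ha : 0 < a)
    (hs : 0 ≤ s) (hn : 0 < n) (hsym : A.IsSymm) (hpd : A.PosDef) (hd : ∀ j, A j j = 1)
    (hoff : ∀ j k, j ≠ k → |A j k| ≤ a / n) :
    ∫ θ : Fin n → ℝ, Real.exp (-(θ ⬝ᵥ A.mulVec θ)) ≤
      (1 + Real.exp (8 + 4 * a)) *
        ∫ θ : Fin n → ℝ, ‖θ‖ ^ s * Real.exp (-(θ ⬝ᵥ A.mulVec θ)) := by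
  set G : (Fin n → ℝ) → ℝ := fun θ => ‖θ‖ ^ s * Real.exp (-(θ ⬝ᵥ A.mulVec θ)) with hG
  have hGi : Integrable G := integrable_norm_rpow_mul_exp_neg_quadForm hpd s hs
  have hG0 : ∀ θ, 0 ≤ G θ := fun θ => by positivity
  let j : Fin n := ⟨0, hn⟩
  have hshift : Integrable fun θ : Fin n → ℝ => G (θ - Pi.single j (-2)) := hGi.comp_sub_right _
  have hE : Integrable fun θ : Fin n → ℝ => Real.exp (-(θ ⬝ᵥ A.mulVec θ)) := by
    simpa using integrable_norm_rpow_mul_exp_neg_quadForm hpd 0 le_rfl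
  have hpt : ∀ θ : Fin n → ℝ, Real.exp (-(θ ⬝ᵥ A.mulVec θ)) ≤
      G θ + Real.exp (8 + 4 * a) * G (θ - Pi.single j (-2)) := by
    intro θ
    rcases le_or_gt 1 ‖θ‖ with h | h
    · have h1 : 1 ≤ ‖θ‖ ^ s := Real.one_le_rpow h hs
      have h2 : Real.exp (-(θ ⬝ᵥ A.mulVec θ)) ≤ G θ := le_mul_of_one_le_left (by positivity) h1
      have h3 : 0 ≤ Real.exp (8 + 4 * a) * G (θ - Pi.single j (-2)) :=
        mul_nonneg (by positivity) (hG0 _)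
      linarith
    · have hrow : A.mulVec θ j ≤ 1 + a := by
        have hk : ∀ k, A j k * θ k ≤ (if j = k then 1 else 0) + a / n := by
          intro k
          have hθk : |θ k| ≤ 1 := (norm_le_pi_norm θ k).trans h.le
          have han : 0 ≤ a / n := by positivity
          split_ifs with hjk
          · subst hjk
            rw [hd, one_mul]
            linarith [le_abs_self (θ j)]
          · calc A j k * θ k ≤ |A j k * θ k| := le_abs_self _
              _ = |A j k| * |θ k| := abs_mul _ _
              _ ≤ a / n * 1 := mul_le_mul (hoff j k hjk) hθk (abs_nonneg _) han
              _ = _ := by ring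
        calc A.mulVec θ j = ∑ k, A j k * θ k := rfl
          _ ≤ ∑ k, ((if j = k then 1 else 0) + a / n) := Finset.sum_le_sum fun k _ => hk k
          _ = 1 + a := by
            have : (n : ℝ) ≠ 0 := by positivity
            simp [Finset.sum_add_distrib]
            field_simp
      have hnorm : 1 ≤ ‖θ - Pi.single j (-2)‖ := by
        have h1 : ‖(Pi.single j (-2) : Fin n → ℝ)‖ = 2 := by simp [Pi.norm_single]
        have h2 := norm_sub_norm_le (Pi.single j (-2) : Fin n → ℝ) θ
        rw [norm_sub_rev, h1] at h2
        linarith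
      have h1 : Real.exp (-(θ ⬝ᵥ A.mulVec θ)) ≤
          Real.exp (8 + 4 * a) * G (θ - Pi.single j (-2)) := by
        have h2 : 1 ≤ ‖θ - Pi.single j (-2)‖ ^ s := Real.one_le_rpow hnorm hs
        calc Real.exp (-(θ ⬝ᵥ A.mulVec θ))
            ≤ Real.exp (8 + 4 * a) *
              (1 * Real.exp (-((θ - Pi.single j (-2)) ⬝ᵥ A.mulVec (θ - Pi.single j (-2))))) := by
              rw [one_mul, ← Real.exp_add, quadForm_sub_single hsym hd]
              gcongr
              linarith
          _ ≤ _ := by simp only [hG]; gcongr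
      linarith [hG0 θ]
  calc _ ≤ ∫ θ, (G θ + Real.exp (8 + 4 * a) * G (θ - Pi.single j (-2))) :=
        integral_mono hE (hGi.add (hshift.const_mul _)) hpt
    _ = (∫ θ, G θ) + Real.exp (8 + 4 * a) * ∫ θ, G θ := by
        rw [integral_add hGi (hshift.const_mul _), integral_const_mul,
          integral_sub_right_eq_self G]
    _ = _ := by ring

/-- Where `|(Aθ)_j| ≥ R`, the integrand at `θ` is at most `2^s e^{-R²}` times the value of
`(‖·‖^s + R^s) e^{-Q}` at the translate of `θ` by `∓R e_j`; the length `R` of the shift `t` minimises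
the Chernoff exponent `t² - 2 |t| R`. -/
lemma weighted_exp_le_translate {n : ℕ} {A : Matrix (Fin n) (Fin n) ℝ} {s R : ℝ} (hs : 0 ≤ s)
    (hsym : A.IsSymm) (hd : ∀ j, A j j = 1) (θ : Fin n → ℝ) (j : Fin n) (t : ℝ) (ht : |t| = R)
    (hbad : R ^ 2 ≤ t * A.mulVec θ j) :
    ‖θ‖ ^ s * Real.exp (-(θ ⬝ᵥ A.mulVec θ)) ≤
      Real.exp (-R ^ 2) * 2 ^ s *
        (‖θ - Pi.single j t‖ ^ s *
            Real.exp (-((θ - Pi.single j t) ⬝ᵥ A.mulVec (θ - Pi.single j t))) +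
          R ^ s * Real.exp (-((θ - Pi.single j t) ⬝ᵥ A.mulVec (θ - Pi.single j t)))) := by
  have hR : 0 ≤ R := ht ▸ abs_nonneg t
  have hsq : t ^ 2 = R ^ 2 := by rw [← ht, sq_abs]
  have hv : ‖(Pi.single j t : Fin n → ℝ)‖ = R := by rw [Pi.norm_single, Real.norm_eq_abs, ht]
  have h1 : ‖θ‖ ^ s ≤ 2 ^ s * (‖θ - Pi.single j t‖ ^ s + R ^ s) := by
    have h := norm_rpow_le_add s hs θ (Pi.single j t : Fin n → ℝ)
    rwa [hv] at h
  have h2 : Real.exp (-(θ ⬝ᵥ A.mulVec θ)) ≤ Real.exp (-R ^ 2) *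
      Real.exp (-((θ - Pi.single j t) ⬝ᵥ A.mulVec (θ - Pi.single j t))) := by
    rw [quadForm_sub_single hsym hd, ← Real.exp_add]
    gcongr
    linarith
  calc _ ≤ (2 ^ s * (‖θ - Pi.single j t‖ ^ s + R ^ s)) * (Real.exp (-R ^ 2) *
          Real.exp (-((θ - Pi.single j t) ⬝ᵥ A.mulVec (θ - Pi.single j t)))) := by gcongr
    _ = _ := by ring

lemma measurableSet_abs_mulVec_le {n : ℕ} (A : Matrix (Fin n) (Fin n) ℝ) (R : ℝ) :
    MeasurableSet {θ : Fin n → ℝ | ∀ j, |A.mulVec θ j| ≤ R} := by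
  refine IsClosed.measurableSet ?_
  simp only [Set.ofPred_forall]
  exact isClosed_iInter fun j => isClosed_le
    (((continuous_apply j).comp (by fun_prop : Continuous fun θ => A.mulVec θ)).abs)
    continuous_const

/-- Chernoff-type bound for the weighted Gaussian integral outside `‖Aθ‖_∞ ≤ R`. -/
lemma setIntegral_compl_le {n : ℕ} {A : Matrix (Fin n) (Fin n) ℝ} {s R : ℝ} (hs : 0 ≤ s)
    (hR : 0 ≤ R) (hsym : A.IsSymm) (hpd : A.PosDef) (hd : ∀ j, A j j = 1) :
    ∫ θ in {θ : Fin n → ℝ | ∀ j, |A.mulVec θ j| ≤ R}ᶜ,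
        ‖θ‖ ^ s * Real.exp (-(θ ⬝ᵥ A.mulVec θ)) ≤
      2 * n * (Real.exp (-R ^ 2) * 2 ^ s *
        ((∫ θ : Fin n → ℝ, ‖θ‖ ^ s * Real.exp (-(θ ⬝ᵥ A.mulVec θ))) +
          R ^ s * ∫ θ : Fin n → ℝ, Real.exp (-(θ ⬝ᵥ A.mulVec θ)))) := by
  set E : (Fin n → ℝ) → ℝ := fun θ => Real.exp (-(θ ⬝ᵥ A.mulVec θ)) with hEdef
  set G : (Fin n → ℝ) → ℝ := fun θ => ‖θ‖ ^ s * Real.exp (-(θ ⬝ᵥ A.mulVec θ)) with hG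
  have hGi : Integrable G := integrable_norm_rpow_mul_exp_neg_quadForm hpd s hs
  have hEi : Integrable E := by
    simpa using integrable_norm_rpow_mul_exp_neg_quadForm hpd 0 le_rfl
  set F : (Fin n → ℝ) → ℝ := fun θ => Real.exp (-R ^ 2) * 2 ^ s * (G θ + R ^ s * E θ) with hF
  have hFi : Integrable F := (hGi.add (hEi.const_mul _)).const_mul _
  have hF0 : ∀ θ, 0 ≤ F θ := fun θ => by positivity
  have hFs : ∀ v : Fin n → ℝ, Integrable fun θ : Fin n → ℝ => F (θ - v) := fun v => hFi.comp_sub_right v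
  have hmeas := measurableSet_abs_mulVec_le A R
  have hone : ∀ (θ : Fin n → ℝ) (j : Fin n) (t : ℝ), |t| = R → R ^ 2 ≤ t * A.mulVec θ j →
      G θ ≤ F (θ - Pi.single j t) := fun θ j t ht h =>
    weighted_exp_le_translate hs hsym hd θ j t ht h
  have hFint : ∫ θ, F θ = Real.exp (-R ^ 2) * 2 ^ s * ((∫ θ, G θ) + R ^ s * ∫ θ, E θ) := by
    rw [hF, integral_const_mul, integral_add hGi (hEi.const_mul _), integral_const_mul]
  clear_value F G E
  set S : (Fin n → ℝ) → ℝ := fun θ =>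
    ∑ j : Fin n, (F (θ - Pi.single j R) + F (θ - Pi.single j (-R))) with hS
  have hSi : Integrable S :=
    integrable_finsetSum _ fun j _ => (hFs _).add (hFs _)
  have hS0 : ∀ θ, 0 ≤ S θ := fun θ => Finset.sum_nonneg fun j _ => add_nonneg (hF0 _) (hF0 _)
  have hbad : ∀ θ ∈ {θ : Fin n → ℝ | ∀ j, |A.mulVec θ j| ≤ R}ᶜ, G θ ≤ S θ := by
    intro θ hθ
    simp only [Set.mem_compl_iff, Set.mem_ofPred_eq, not_forall, not_le] at hθ
    obtain ⟨j, hj⟩ := hθ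
    have hterm : G θ ≤ F (θ - Pi.single j R) + F (θ - Pi.single j (-R)) := by
      rcases lt_abs.mp hj with h | h
      · have := hone θ j R (abs_of_nonneg hR)
          (by rw [sq]; exact mul_le_mul_of_nonneg_left h.le hR)
        linarith [hF0 (θ - Pi.single j (-R))]
      · have := hone θ j (-R) (by rw [abs_neg, abs_of_nonneg hR])
          (by rw [sq, neg_mul_comm]; exact mul_le_mul_of_nonneg_left h.le hR)
        linarith [hF0 (θ - Pi.single j R)]
    have hnn : ∀ i ∈ (Finset.univ : Finset (Fin n)),
        0 ≤ F (θ - Pi.single i R) + F (θ - Pi.single i (-R)) :=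
      fun i _ => add_nonneg (hF0 _) (hF0 _)
    have hle := Finset.single_le_sum hnn (Finset.mem_univ j)
    exact hterm.trans hle
  calc _ ≤ ∫ θ in {θ : Fin n → ℝ | ∀ j, |A.mulVec θ j| ≤ R}ᶜ, S θ :=
        setIntegral_mono_on hGi.integrableOn hSi.integrableOn hmeas.compl hbad
    _ ≤ ∫ θ, S θ := setIntegral_le_integral hSi (Filter.Eventually.of_forall hS0)
    _ = ∑ j : Fin n, ((∫ θ, F θ) + ∫ θ, F θ) := by
        have hint : ∀ j ∈ (Finset.univ : Finset (Fin n)), Integrable fun θ : Fin n → ℝ =>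
            F (θ - Pi.single j R) + F (θ - Pi.single j (-R)) :=
          fun j _ => (hFs _).add (hFs _)
        simp only [hS]
        rw [integral_finsetSum _ hint]
        refine Finset.sum_congr rfl fun j _ => ?_
        rw [integral_add (hFs _) (hFs _), integral_sub_right_eq_self F,
          integral_sub_right_eq_self F]
    _ = 2 * n * ∫ θ, F θ := by simp; ring
    _ = _ := by rw [hFint]

/-! ### The relative error -/

/-- formula (6.4) of the paper: restricting a Gaussian-type integral to the
region `‖Aθ‖_∞ ≤ r n^ε` changes it only by an exponentially small relative error. -/
theorem gaussian_tail_estimate (a b ε r s : ℝ) (ha : 0 < a) (hb : 0 < b) (hε : 0 < ε)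
    (hr : 0 < r) (hs : 0 ≤ s) :
    ∃ c₅ c : ℝ, 0 < c₅ ∧ 0 < c ∧
      ∀ (n : ℕ) (A : Matrix (Fin n) (Fin n) ℝ), CondA a b A →
        ∃ δ : ℝ, |δ| ≤ c * Real.exp (-c₅ * (n : ℝ) ^ (2 * ε)) ∧
          (∫ θ in {θ : Fin n → ℝ | ∀ j, |A.mulVec θ j| ≤ r * (n : ℝ) ^ (ε : ℝ)},
              ‖θ‖ ^ (s : ℝ) * Real.exp (-(θ ⬝ᵥ A.mulVec θ))) =
            (1 + δ) * ∫ θ : Fin n → ℝ, ‖θ‖ ^ (s : ℝ) * Real.exp (-(θ ⬝ᵥ A.mulVec θ)) := by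
  obtain ⟨C₁, hC₁, h₁⟩ := exists_rpow_le_exp_sq (1 / ε) (1 / 4) (by positivity) (by norm_num)
  obtain ⟨C₂, hC₂, h₂⟩ := exists_rpow_le_exp_sq s (1 / 4) hs (by norm_num)
  set K : ℝ := 1 + Real.exp (8 + 4 * a) with hK
  have hK0 : 0 < K := by positivity
  refine ⟨r ^ 2 / 2, 2 * ((r⁻¹) ^ (1 / ε) * C₁) * (2 ^ s * (1 + K * C₂)),
    by positivity, by positivity, ?_⟩
  rintro n A ⟨hsym, hpd, hd, hoff, -⟩
  rcases Nat.eq_zero_or_pos n with hn | hn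
  · subst hn
    exact ⟨0, by simp only [abs_zero]; positivity, by simp⟩
  set R : ℝ := r * (n : ℝ) ^ ε with hR
  have hn0 : (0 : ℝ) < n := by exact_mod_cast hn
  have hR0 : 0 < R := by positivity
  set G : (Fin n → ℝ) → ℝ := fun θ => ‖θ‖ ^ s * Real.exp (-(θ ⬝ᵥ A.mulVec θ)) with hG
  have hGi : Integrable G := integrable_norm_rpow_mul_exp_neg_quadForm hpd s hs
  have hEi : Integrable fun θ : Fin n → ℝ => Real.exp (-(θ ⬝ᵥ A.mulVec θ)) := by
    simpa using integrable_norm_rpow_mul_exp_neg_quadForm hpd 0 le_rfl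
  have hM0 : 0 < ∫ θ : Fin n → ℝ, Real.exp (-(θ ⬝ᵥ A.mulVec θ)) := integral_exp_pos hEi
  have hM : ∫ θ : Fin n → ℝ, Real.exp (-(θ ⬝ᵥ A.mulVec θ)) ≤ K * ∫ θ, G θ :=
    integral_exp_le_const_mul ha hs hn hsym hpd hd hoff
  have htail := setIntegral_compl_le hs hR0.le hsym hpd hd
  set U : Set (Fin n → ℝ) := {θ : Fin n → ℝ | ∀ j, |A.mulVec θ j| ≤ R} with hU
  have hmeas : MeasurableSet U := measurableSet_abs_mulVec_le A R
  have hMs : 0 < ∫ θ, G θ := pos_of_mul_pos_right (hM0.trans_le hM) hK0.le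
  have hsplit := integral_add_compl hmeas hGi
  have hbad0 : 0 ≤ ∫ θ in Uᶜ, G θ := setIntegral_nonneg hmeas.compl fun θ _ => by positivity
  refine ⟨-((∫ θ in Uᶜ, G θ) / ∫ θ, G θ), ?_, ?_⟩
  · rw [abs_neg, abs_of_nonneg (by positivity), div_le_iff₀ hMs]
    have hnR : (n : ℝ) ≤ (r⁻¹) ^ (1 / ε) * C₁ * Real.exp (1 / 4 * R ^ 2) := by
      calc (n : ℝ) = (r⁻¹ * R) ^ (1 / ε) := by
            rw [hR, inv_mul_cancel_left₀ hr.ne', ← Real.rpow_mul hn0.le,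
              mul_one_div_cancel hε.ne', Real.rpow_one]
        _ = (r⁻¹) ^ (1 / ε) * R ^ (1 / ε) := Real.mul_rpow (by positivity) hR0.le
        _ ≤ (r⁻¹) ^ (1 / ε) * (C₁ * Real.exp (1 / 4 * R ^ 2)) := by gcongr; exact h₁ R hR0.le
        _ = _ := by ring
    have hsR : 1 + K * R ^ s ≤ (1 + K * C₂) * Real.exp (1 / 4 * R ^ 2) := by
      have e1 : 1 ≤ Real.exp (1 / 4 * R ^ 2) := Real.one_le_exp (by positivity)
      have e2 : K * R ^ s ≤ K * (C₂ * Real.exp (1 / 4 * R ^ 2)) := by gcongr; exact h₂ R hR0.le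
      linarith
    have hRsq : R ^ 2 = r ^ 2 * (n : ℝ) ^ (2 * ε) := by
      rw [hR, mul_pow, mul_comm 2 ε, Real.rpow_mul hn0.le, Real.rpow_two]
    have hexp : Real.exp (1 / 4 * R ^ 2) * Real.exp (1 / 4 * R ^ 2) * Real.exp (-R ^ 2) =
        Real.exp (-(r ^ 2 / 2) * (n : ℝ) ^ (2 * ε)) := by
      rw [← Real.exp_add, ← Real.exp_add]
      congr 1
      linarith
    calc ∫ θ in Uᶜ, G θ
        ≤ 2 * n * (Real.exp (-R ^ 2) * 2 ^ s * ((∫ θ, G θ) + R ^ s * (K * ∫ θ, G θ))) := by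
          refine htail.trans ?_
          gcongr
      _ = 2 * n * (Real.exp (-R ^ 2) * 2 ^ s * (1 + K * R ^ s)) * ∫ θ, G θ := by ring
      _ ≤ 2 * ((r⁻¹) ^ (1 / ε) * C₁ * Real.exp (1 / 4 * R ^ 2)) * (Real.exp (-R ^ 2) * 2 ^ s *
            ((1 + K * C₂) * Real.exp (1 / 4 * R ^ 2))) * ∫ θ, G θ := by
          gcongr
      _ = 2 * ((r⁻¹) ^ (1 / ε) * C₁) * (2 ^ s * (1 + K * C₂)) * (Real.exp (1 / 4 * R ^ 2) *
            Real.exp (1 / 4 * R ^ 2) * Real.exp (-R ^ 2)) * ∫ θ, G θ := by ring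
      _ = _ := by rw [hexp]
  · have : (1 + -((∫ θ in Uᶜ, G θ) / ∫ θ, G θ)) * ∫ θ, G θ = (∫ θ, G θ) - ∫ θ in Uᶜ, G θ := by
      field_simp
      ring
    rw [this, ← hsplit]
    ring
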